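/- Let A be a real m×m matrix, B ∈ ℝ^m, C a real 1×m matrix, D ∈ ℝ, a ∈ ℝ, ω > 0, and t_k = kπ/ω. Assume A² + ω²I is invertible and let x_bls(t) = −(A² + ω²I)⁻¹ (sin(ωt)·A + ω cos(ωt)·I) B a, the periodic solution of ẋ = Ax + Ba sin(ωt). Let w be the square wave with mean w̄ and amplitude ŵ (values in ℝ^m), let x_q : ℝ → ℝ^m be continuous, 2π/ω-periodic and satisfy x_q′(t) = A(x_q(t) + w(t)) for t ∉ {t_k}, and set q = x_q + w. Define the output y(t) = C (x_bls(t) + q(t)) + D a sin(ωt). Then, for every integer k ≥ 1 such that ikω is not an eigenvalue of A, the k-th complex Fourier coefficient c_k(y) = (ω/(2π)) ∫₀^{2π/ω} y(t) e^{−ikωt} dt is: c_1(y) = (C (iωI − A)⁻¹ B + D)·(a/(2i)) + (2ω/π) C (iωI − A)⁻¹ ŵ for k = 1; c_k(y) = 0 for even k ≥ 2; and c_k(y) = (2ω/π) C (ikωI − A)⁻¹ ŵ for odd k ≥ 3. (Thus the first-order describing function of a reset system equals its base-linear frequency response plus the first harmonic of the nonlinearity, while all higher-order describing functions coincide with the corresponding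 harmonics of the nonlinearity.) -/

import Mathlib

open Real Matrix Set

/-- Full-period integral of a complex exponential. -/
lemma aux_exp_full (ω : ℝ) (hω : 0 < ω) (n : ℤ) :
    ∫ t in (0 : ℝ)..(2 * Real.pi / ω), Complex.exp (-Complex.I * n * ω * t) =
      if n = 0 then ((2 * Real.pi / ω : ℝ) : ℂ) else 0 := by
  have hω' : (ω : ℂ) ≠ 0 := by exact_mod_cast hω.ne'
  split_ifs with h
  · subst h
    simp
  · have hn : (n : ℂ) ≠ 0 := by exact_mod_cast h
    have hc : -Complex.I * n * ω ≠ 0 := by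
      simp [hn, hω', Complex.I_ne_zero]
    rw [integral_exp_mul_complex hc]
    have : -Complex.I * n * ω * ((2 * Real.pi / ω : ℝ) : ℂ) =
        ((-n : ℤ) : ℂ) * (2 * Real.pi * Complex.I) := by
      push_cast
      field_simp
    rw [this, Complex.exp_int_mul_two_pi_mul_I]
    simp

lemma aux_exp_sin (ω : ℝ) (hω : 0 < ω) (k : ℤ) (hk : 1 ≤ k) :
    ∫ t in (0 : ℝ)..(2 * Real.pi / ω),
      Complex.exp (-Complex.I * k * ω * t) * ((Real.sin (ω * t) : ℝ) : ℂ) =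
      if k = 1 then ((2 * Real.pi / ω : ℝ) : ℂ) / (2 * Complex.I) else 0 := by
  have h : ∀ t : ℝ, Complex.exp (-Complex.I * k * ω * t) * ((Real.sin (ω * t) : ℝ) : ℂ) =
      (Complex.exp (-Complex.I * ((k - 1 : ℤ) : ℂ) * ω * t) -
        Complex.exp (-Complex.I * ((k + 1 : ℤ) : ℂ) * ω * t)) / (2 * Complex.I) := by
    intro t
    have e1 : -Complex.I * ((k - 1 : ℤ) : ℂ) * ω * t =
      -Complex.I * k * ω * t + (ω * t : ℂ) * Complex.I := by push_cast; ring
    have e2 : -Complex.I * ((k + 1 : ℤ) : ℂ) * ω * t =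
      -Complex.I * k * ω * t + -(ω * t : ℂ) * Complex.I := by push_cast; ring
    rw [e1, e2, Complex.exp_add, Complex.exp_add, Complex.ofReal_sin, Complex.sin]
    push_cast
    field_simp
    rw [Complex.I_sq]
    ring
  simp_rw [h]
  rw [intervalIntegral.integral_div, intervalIntegral.integral_sub, aux_exp_full ω hω,
    aux_exp_full ω hω]
  · have h1 : k + 1 ≠ 0 := by omega
    by_cases h2 : k = 1
    · subst h2; simp
    · have h3 : k - 1 ≠ 0 := by omega
      simp [h1, h2, h3]
  · exact Continuous.intervalIntegrable (by fun_prop) _ _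
  · exact Continuous.intervalIntegrable (by fun_prop) _ _

/-- Square wave: integrability and Fourier coefficient. -/
lemma aux_square (ω : ℝ) (hω : 0 < ω) (k : ℤ) (hk : 1 ≤ k) (u v : ℝ) (f : ℝ → ℝ)
    (hf : ∀ t : ℝ, f t = if Even ⌊t * ω / Real.pi⌋ then u + v else u - v) :
    IntervalIntegrable (fun t : ℝ => Complex.exp (-Complex.I * k * ω * t) * (f t : ℂ))
      MeasureTheory.volume 0 (2 * Real.pi / ω) ∧
    (Complex.I * k * ω) * ∫ t in (0 : ℝ)..(2 * Real.pi / ω),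
      Complex.exp (-Complex.I * k * ω * t) * (f t : ℂ) = 2 * (1 - (-1) ^ k) * v := by
  have hπ := Real.pi_pos
  have hω' : (ω : ℂ) ≠ 0 := by exact_mod_cast hω.ne'
  have hk' : (k : ℂ) ≠ 0 := by exact_mod_cast (by omega : k ≠ 0)
  have hc : -Complex.I * k * ω ≠ 0 := by
    simp [hk', hω', Complex.I_ne_zero]
  have hh : 0 ≤ Real.pi / ω := by positivity
  have hh2 : Real.pi / ω ≤ 2 * Real.pi / ω := by gcongr; linarith
  have E1 : EqOn (fun t : ℝ => Complex.exp (-Complex.I * k * ω * t) * ((u + v : ℝ) : ℂ))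
      (fun t : ℝ => Complex.exp (-Complex.I * k * ω * t) * (f t : ℂ))
      (uIoo 0 (Real.pi / ω)) := by
    rw [uIoo_of_le hh]
    intro t ht
    have : ⌊t * ω / Real.pi⌋ = 0 := by
      rw [Int.floor_eq_iff]
      have h1 := ht.1
      have h2 := (lt_div_iff₀ hω).1 ht.2
      constructor
      · push_cast; positivity
      · rw [div_lt_iff₀ hπ]; push_cast; linarith
    simp [hf, this]
  have E2 : EqOn (fun t : ℝ => Complex.exp (-Complex.I * k * ω * t) * ((u - v : ℝ) : ℂ))
      (fun t : ℝ => Complex.exp (-Complex.I * k * ω * t) * (f t : ℂ))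
      (uIoo (Real.pi / ω) (2 * Real.pi / ω)) := by
    rw [uIoo_of_le hh2]
    intro t ht
    have : ⌊t * ω / Real.pi⌋ = 1 := by
      rw [Int.floor_eq_iff]
      have h1 := (div_lt_iff₀ hω).1 ht.1
      have h2 := (lt_div_iff₀ hω).1 ht.2
      constructor
      · rw [le_div_iff₀ hπ]; push_cast; linarith
      · rw [div_lt_iff₀ hπ]; push_cast; linarith
    simp [hf, this]
  have C1 : ∀ (r : ℂ) (x y : ℝ), IntervalIntegrable
      (fun t : ℝ => Complex.exp (-Complex.I * k * ω * t) * r) MeasureTheory.volume x y :=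
    fun r x y => Continuous.intervalIntegrable (by fun_prop) _ _
  have I1 := (C1 ((u + v : ℝ) : ℂ) _ _).congr_uIoo E1
  have I2 := (C1 ((u - v : ℝ) : ℂ) _ _).congr_uIoo E2
  refine ⟨I1.trans I2, ?_⟩
  rw [← intervalIntegral.integral_add_adjacent_intervals I1 I2,
    ← intervalIntegral.integral_congr_uIoo E1, ← intervalIntegral.integral_congr_uIoo E2,
    intervalIntegral.integral_mul_const, intervalIntegral.integral_mul_const,
    integral_exp_mul_complex hc, integral_exp_mul_complex hc]
  have r1 : Complex.exp (-Complex.I * k * ω * ((Real.pi / ω : ℝ) : ℂ)) = (-1) ^ k := by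
    have : -Complex.I * k * ω * ((Real.pi / ω : ℝ) : ℂ) = (k : ℂ) * (-(Real.pi * Complex.I)) := by
      push_cast
      field_simp
    rw [this, Complex.exp_int_mul, Complex.exp_neg, Complex.exp_pi_mul_I]
    norm_num
  have r2 : Complex.exp (-Complex.I * k * ω * ((2 * Real.pi / ω : ℝ) : ℂ)) = 1 := by
    have : -Complex.I * k * ω * ((2 * Real.pi / ω : ℝ) : ℂ) =
        ((-k : ℤ) : ℂ) * (2 * Real.pi * Complex.I) := by
      push_cast
      field_simp
    rw [this, Complex.exp_int_mul_two_pi_mul_I]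
  rw [r1, r2]
  push_cast
  have hI := Complex.I_ne_zero
  simp only [mul_zero, Complex.exp_zero]
  field_simp
  ring

/-- The base-linear periodic response solves its ODE. -/
lemma aux_bls (m : ℕ) (A : Matrix (Fin m) (Fin m) ℝ) (B : Fin m → ℝ) (a ω : ℝ)
    (hAinv : IsUnit (A ^ 2 + (ω ^ 2) • (1 : Matrix (Fin m) (Fin m) ℝ)))
    (x_bls : ℝ → Fin m → ℝ)
    (hx_bls : ∀ t, x_bls t = -(((A ^ 2 + (ω ^ 2) • (1 : Matrix (Fin m) (Fin m) ℝ))⁻¹ *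
        (Real.sin (ω * t) • A +
          (ω * Real.cos (ω * t)) • (1 : Matrix (Fin m) (Fin m) ℝ))).mulVec (a • B))) (t : ℝ) :
    HasDerivAt x_bls (A.mulVec (x_bls t) + (a * Real.sin (ω * t)) • B) t := by
  set M := A ^ 2 + (ω ^ 2) • (1 : Matrix (Fin m) (Fin m) ℝ) with hM
  have hdet : IsUnit M.det := (Matrix.isUnit_iff_isUnit_det M).1 hAinv
  have hMi : M⁻¹ * M = 1 := Matrix.nonsing_inv_mul M hdet
  have hMi' : M * M⁻¹ = 1 := Matrix.mul_nonsing_inv M hdet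
  have hcomm : A * M = M * A := by
    rw [hM]; simp [mul_add, add_mul, pow_two, mul_assoc]
  have hcomm' : A * M⁻¹ = M⁻¹ * A := by
    calc A * M⁻¹ = M⁻¹ * M * (A * M⁻¹) := by rw [hMi, one_mul]
      _ = M⁻¹ * (M * A) * M⁻¹ := by simp only [mul_assoc]
      _ = M⁻¹ * (A * M) * M⁻¹ := by rw [hcomm]
      _ = M⁻¹ * A * (M * M⁻¹) := by simp only [mul_assoc]
      _ = M⁻¹ * A := by rw [hMi', mul_one]
  set b := a • B with hb
  have hx : x_bls = fun t => -(Real.sin (ω * t) • (M⁻¹ * A).mulVec b +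
      (ω * Real.cos (ω * t)) • M⁻¹.mulVec b) := by
    funext t
    rw [hx_bls, mul_add, Matrix.add_mulVec, Matrix.mul_smul, Matrix.mul_smul, Matrix.smul_mulVec,
      Matrix.smul_mulVec, mul_one]
  have hlin : HasDerivAt (fun t : ℝ => ω * t) ω t := by
    simpa using (hasDerivAt_id t).const_mul ω
  have hs : HasDerivAt (fun t : ℝ => Real.sin (ω * t)) (Real.cos (ω * t) * ω) t := hlin.sin
  have hco : HasDerivAt (fun t : ℝ => ω * Real.cos (ω * t)) (ω * (-Real.sin (ω * t) * ω)) t :=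
    hlin.cos.const_mul ω
  have hd := ((hs.smul_const ((M⁻¹ * A).mulVec b)).add (hco.smul_const (M⁻¹.mulVec b))).neg
  have key : (M⁻¹ * A * A).mulVec b + ω ^ 2 • M⁻¹.mulVec b = b := by
    have : M⁻¹ * A * A + ω ^ 2 • M⁻¹ = 1 := by
      rw [← hMi, hM, mul_add, pow_two, mul_assoc]; simp
    rw [← Matrix.smul_mulVec, ← Matrix.add_mulVec, this, Matrix.one_mulVec]
  rw [hx]
  refine hd.congr_deriv ?_
  symm
  simp only [Matrix.mulVec_neg, Matrix.mulVec_add, Matrix.mulVec_smul, Matrix.mulVec_mulVec]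
  rw [← mul_assoc, hcomm']
  ext i
  have hk := congrFun key i
  have hbi : b i = a * B i := by simp [hb]
  rw [hbi] at hk
  simp only [Pi.add_apply, Pi.neg_apply, Pi.smul_apply, smul_eq_mul] at hk ⊢
  linear_combination (-Real.sin (ω * t)) * hk

/-- Fourier coefficients of the forced periodic response. -/
lemma aux_ode (m : ℕ) (A : Matrix (Fin m) (Fin m) ℝ) (B : Fin m → ℝ) (a ω : ℝ) (hω : 0 < ω)
    (k : ℤ) (hk : 1 ≤ k) (wbar what : Fin m → ℝ) (w : ℝ → Fin m → ℝ)
    (hw : ∀ t : ℝ, w t = if Even ⌊t * ω / Real.pi⌋ then wbar + what else wbar - what)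
    (z : ℝ → Fin m → ℝ) (hcont : Continuous z) (hper : z (2 * Real.pi / ω) = z 0)
    (hderiv : ∀ t : ℝ, (∀ k : ℤ, t ≠ (k : ℝ) * Real.pi / ω) →
      HasDerivAt z (A.mulVec (z t + w t) + (a * Real.sin (ω * t)) • B) t) :
    (∀ j, IntervalIntegrable
      (fun t : ℝ => Complex.exp (-Complex.I * k * ω * t) * (((z t + w t) j : ℝ) : ℂ))
      MeasureTheory.volume 0 (2 * Real.pi / ω)) ∧
    ((Complex.I * k * ω) • (1 : Matrix (Fin m) (Fin m) ℂ) - A.map Complex.ofReal).mulVec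
      (fun j => ∫ t in (0 : ℝ)..(2 * Real.pi / ω),
        Complex.exp (-Complex.I * k * ω * t) * (((z t + w t) j : ℝ) : ℂ)) =
      (2 * (1 - (-1) ^ k) : ℂ) • (fun i => ((what i : ℝ) : ℂ)) +
      (a * (if k = 1 then ((2 * Real.pi / ω : ℝ) : ℂ) / (2 * Complex.I) else 0) : ℂ) •
        (fun i => ((B i : ℝ) : ℂ)) := by
  have hsq := fun j => aux_square ω hω k hk (wbar j) (what j) (fun t => w t j) (by
    intro t
    rw [hw]
    split_ifs <;> simp)
  have hzc : ∀ j, Continuous fun t => z t j := fun j => (continuous_apply j).comp hcont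
  have hzi : ∀ j, IntervalIntegrable
      (fun t : ℝ => Complex.exp (-Complex.I * k * ω * t) * ((z t j : ℝ) : ℂ))
      MeasureTheory.volume 0 (2 * Real.pi / ω) := fun j => by
    have := hzc j
    exact Continuous.intervalIntegrable (by fun_prop) _ _
  have hpi : ∀ j, IntervalIntegrable
      (fun t : ℝ => Complex.exp (-Complex.I * k * ω * t) * (((z t + w t) j : ℝ) : ℂ))
      MeasureTheory.volume 0 (2 * Real.pi / ω) := fun j => by
    refine ((hzi j).add (hsq j).1).congr (fun t _ => ?_)
    simp [mul_add]
  refine ⟨hpi, ?_⟩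
  have hsi : IntervalIntegrable
      (fun t : ℝ => Complex.exp (-Complex.I * k * ω * t) * ((Real.sin (ω * t) : ℝ) : ℂ))
      MeasureTheory.volume 0 (2 * Real.pi / ω) :=
    Continuous.intervalIntegrable (by fun_prop) _ _
  have hsin := aux_exp_sin ω hω k hk
  rw [← hsin]
  funext j
  set P : Fin m → ℂ := fun j => ∫ t in (0 : ℝ)..(2 * Real.pi / ω),
        Complex.exp (-Complex.I * k * ω * t) * (((z t + w t) j : ℝ) : ℂ) with hP
  set S := ∫ t in (0 : ℝ)..(2 * Real.pi / ω),
      Complex.exp (-Complex.I * k * ω * t) * ((Real.sin (ω * t) : ℝ) : ℂ) with hS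
  have hsum : IntervalIntegrable (fun t : ℝ => ∑ l, (A j l : ℂ) *
      (Complex.exp (-Complex.I * k * ω * t) * (((z t + w t) l : ℝ) : ℂ)))
      MeasureTheory.volume 0 (2 * Real.pi / ω) := by
    have := IntervalIntegrable.sum (Finset.univ) (μ := MeasureTheory.volume)
      (f := fun l => fun t : ℝ => (A j l : ℂ) *
      (Complex.exp (-Complex.I * k * ω * t) * (((z t + w t) l : ℝ) : ℂ)))
      (fun l _ => (hpi l).const_mul (A j l : ℂ))
    refine this.congr (fun t _ => ?_)
    simp
  have T1 := ((hpi j).sub (hsq j).1).const_mul (-(Complex.I * k * ω))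
  have T2 := hsi.const_mul ((a : ℂ) * B j)
  have hFTC := MeasureTheory.integral_eq_of_hasDerivAt_off_countable_of_le
    (fun t : ℝ => Complex.exp (-Complex.I * k * ω * t) * ((z t j : ℝ) : ℂ))
    (fun t : ℝ => -(Complex.I * k * ω) *
        (Complex.exp (-Complex.I * k * ω * t) * (((z t + w t) j : ℝ) : ℂ) -
          Complex.exp (-Complex.I * k * ω * t) * ((w t j : ℝ) : ℂ)) +
      ∑ l, (A j l : ℂ) *
        (Complex.exp (-Complex.I * k * ω * t) * (((z t + w t) l : ℝ) : ℂ)) +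
      (a : ℂ) * B j * (Complex.exp (-Complex.I * k * ω * t) * ((Real.sin (ω * t) : ℝ) : ℂ)))
    (a := 0) (b := 2 * Real.pi / ω) (by positivity)
    (s := range fun n : ℤ => (n : ℝ) * Real.pi / ω) (countable_range _)
    (by have := hzc j; fun_prop)
    (by
      rintro t ⟨-, ht⟩
      have hd := hderiv t (fun n hn => ht ⟨n, hn.symm⟩)
      have hdj := (hasDerivAt_pi.1 hd j).ofReal_comp
      have he : HasDerivAt (fun t : ℝ => Complex.exp (-Complex.I * k * ω * t))
          (Complex.exp (-Complex.I * k * ω * t) * (-Complex.I * k * ω)) t := by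
        have h0 : HasDerivAt (fun t : ℝ => -Complex.I * k * ω * (t : ℂ))
            (-Complex.I * k * ω) t := by
          simpa using (Complex.ofRealCLM.hasDerivAt (x := t)).const_mul (-Complex.I * k * ω)
        exact h0.cexp
      refine (he.mul hdj).congr_deriv ?_
      have : (((A.mulVec (z t + w t) + (a * Real.sin (ω * t)) • B) j : ℝ) : ℂ) =
          ∑ l, (A j l : ℂ) * (((z t + w t) l : ℝ) : ℂ) + a * (Real.sin (ω * t) : ℝ) * B j := by
        simp only [Matrix.mulVec, dotProduct, Pi.add_apply, Pi.smul_apply, smul_eq_mul]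
        push_cast
        rfl
      rw [this, mul_add, Finset.mul_sum]
      have h2 : ∀ l, Complex.exp (-Complex.I * k * ω * t) *
          ((A j l : ℂ) * (((z t + w t) l : ℝ) : ℂ)) = (A j l : ℂ) *
        (Complex.exp (-Complex.I * k * ω * t) * (((z t + w t) l : ℝ) : ℂ)) := fun l => by ring
      simp only [h2]
      rw [Pi.add_apply (z t) (w t) j, Complex.ofReal_add]
      ring)
    ((T1.add hsum).add T2)
  rw [intervalIntegral.integral_add (T1.add hsum) T2, intervalIntegral.integral_add T1 hsum,
    intervalIntegral.integral_const_mul, intervalIntegral.integral_sub (hpi j) (hsq j).1,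
    intervalIntegral.integral_const_mul,
    intervalIntegral.integral_finsetSum (fun l _ => (hpi l).const_mul (A j l : ℂ))] at hFTC
  simp only [intervalIntegral.integral_const_mul] at hFTC
  have r2 : Complex.exp (-Complex.I * k * ω * ((2 * Real.pi / ω : ℝ) : ℂ)) = 1 := by
    have hω' : (ω : ℂ) ≠ 0 := by exact_mod_cast hω.ne'
    have : -Complex.I * k * ω * ((2 * Real.pi / ω : ℝ) : ℂ) =
        ((-k : ℤ) : ℂ) * (2 * Real.pi * Complex.I) := by
      push_cast
      field_simp
    rw [this, Complex.exp_int_mul_two_pi_mul_I]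
  rw [r2, hper] at hFTC
  simp only [Complex.ofReal_zero, mul_zero, Complex.exp_zero, sub_self] at hFTC
  have hs2 := (hsq j).2
  rw [Matrix.sub_mulVec, Matrix.smul_mulVec, Matrix.one_mulVec]
  have hA : (A.map Complex.ofReal).mulVec P j = ∑ l, (A j l : ℂ) * P l := by
    simp [Matrix.mulVec, dotProduct]
  simp only [Pi.sub_apply, Pi.add_apply, Pi.smul_apply, smul_eq_mul, hA]
  simp only [← hS] at hFTC
  have hFTC' : -(Complex.I * k * ω) * (P j - ∫ t in (0 : ℝ)..(2 * Real.pi / ω),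
        Complex.exp (-Complex.I * k * ω * t) * ((w t j : ℝ) : ℂ)) + ∑ l, (A j l : ℂ) * P l +
        (a : ℂ) * B j * S = 0 := hFTC
  linear_combination hs2 - hFTC'



/-- **HOSIDF of a reset system = base-linear frequency response plus harmonics of the
nonlinearity.**
Let `x_bls` be the periodic response of `ẋ = Ax + B a sin(ωt)`, let `q = x_q + w` be
the nonlinear component driven by the square wave `w` with mean `w̄` and amplitude
`ŵ`, and let `y = C (x_bls + q) + D a sin(ωt)` be the output.  Then for every `k ≥ 1`
such that `ikω` is not an eigenvalue of `A`, the `k`-th Fourier coefficient of `y` is: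
`(C (iωI - A)⁻¹ B + D) (a/(2i)) + (2ω/π) C (iωI - A)⁻¹ ŵ` for `k = 1`, zero for even
`k ≥ 2`, and `(2ω/π) C (ikωI - A)⁻¹ ŵ` for odd `k ≥ 3`. -/
theorem reset_system_output_harmonics (m : ℕ)
    (A : Matrix (Fin m) (Fin m) ℝ) (B : Fin m → ℝ)
    (C : Matrix (Fin 1) (Fin m) ℝ) (D : ℝ) (a : ℝ) (ω : ℝ) (hω : 0 < ω)
    (hAinv : IsUnit (A ^ 2 + (ω ^ 2) • (1 : Matrix (Fin m) (Fin m) ℝ)))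
    (x_bls : ℝ → Fin m → ℝ)
    (hx_bls : ∀ t, x_bls t = -(((A ^ 2 + (ω ^ 2) • (1 : Matrix (Fin m) (Fin m) ℝ))⁻¹ *
        (Real.sin (ω * t) • A +
          (ω * Real.cos (ω * t)) • (1 : Matrix (Fin m) (Fin m) ℝ))).mulVec (a • B)))
    (wbar what : Fin m → ℝ) (w : ℝ → Fin m → ℝ)
    (hw : ∀ t : ℝ, w t = if Even ⌊t * ω / Real.pi⌋ then wbar + what else wbar - what)
    (x_q : ℝ → Fin m → ℝ)
    (hcont : Continuous x_q)
    (hper : Function.Periodic x_q (2 * Real.pi / ω))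
    (hderiv : ∀ t : ℝ, (∀ k : ℤ, t ≠ (k : ℝ) * Real.pi / ω) →
      HasDerivAt x_q (A.mulVec (x_q t + w t)) t)
    (q : ℝ → Fin m → ℝ) (hq : ∀ t, q t = x_q t + w t)
    (y : ℝ → Fin 1 → ℝ)
    (hy : ∀ t, y t = C.mulVec (x_bls t + q t) +
      fun _ : Fin 1 => D * a * Real.sin (ω * t))
    (c : ℤ → Fin 1 → ℂ)
    (hc : ∀ k : ℤ, c k = ((ω / (2 * Real.pi) : ℝ) : ℂ) •
      ∫ t in (0 : ℝ)..(2 * Real.pi / ω),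
        Complex.exp (-Complex.I * k * ω * t) • (fun i => ((y t i : ℝ) : ℂ))) :
    ∀ k : ℤ, 1 ≤ k →
      (Complex.I * k * ω) ∉ spectrum ℂ (A.map Complex.ofReal) →
      ((k = 1 → c 1 = ((a : ℂ) / (2 * Complex.I)) •
          ((C.map Complex.ofReal).mulVec
            ((((Complex.I * ω) • (1 : Matrix (Fin m) (Fin m) ℂ) -
              A.map Complex.ofReal)⁻¹).mulVec (fun i => ((B i : ℝ) : ℂ))) +
            fun _ : Fin 1 => (D : ℂ)) +
          ((2 * ω / Real.pi : ℝ) : ℂ) •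
          ((C.map Complex.ofReal).mulVec
            ((((Complex.I * ω) • (1 : Matrix (Fin m) (Fin m) ℂ) -
              A.map Complex.ofReal)⁻¹).mulVec (fun i => ((what i : ℝ) : ℂ))))) ∧
      (Even k → c k = 0) ∧
      (3 ≤ k → Odd k → c k = ((2 * ω / Real.pi : ℝ) : ℂ) •
          ((C.map Complex.ofReal).mulVec
            ((((Complex.I * k * ω) • (1 : Matrix (Fin m) (Fin m) ℂ) -
              A.map Complex.ofReal)⁻¹).mulVec (fun i => ((what i : ℝ) : ℂ)))))) := by
  intro k hk hspec
  have hπ := Real.pi_pos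
  have hω' : (ω : ℂ) ≠ 0 := by exact_mod_cast hω.ne'
  have hπ' : (Real.pi : ℂ) ≠ 0 := by exact_mod_cast hπ.ne'
  have hbd := aux_bls m A B a ω hAinv x_bls hx_bls
  have hbc : Continuous x_bls :=
    continuous_iff_continuousAt.2 fun t => (hbd t).continuousAt
  have hbT : x_bls (2 * Real.pi / ω) = x_bls 0 := by
    rw [hx_bls, hx_bls]
    have : ω * (2 * Real.pi / ω) = 2 * Real.pi := by field_simp
    rw [this]
    simp
  have hqT : x_q (2 * Real.pi / ω) = x_q 0 := by simpa using hper 0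
  obtain ⟨hint, hmain⟩ := aux_ode m A B a ω hω k hk wbar what w hw (fun t => x_bls t + x_q t)
    (hbc.add hcont) (by simp only [hbT, hqT]) (by
      intro t ht
      refine ((hbd t).add (hderiv t ht)).congr_deriv ?_
      simp only [Matrix.mulVec_add]
      abel)
  have hsin := aux_exp_sin ω hω k hk
  set N := (Complex.I * k * ω) • (1 : Matrix (Fin m) (Fin m) ℂ) - A.map Complex.ofReal with hN
  have hNu : IsUnit N := by
    have := spectrum.notMem_iff.1 hspec
    rwa [Algebra.algebraMap_eq_smul_one] at this
  have hNdet : IsUnit N.det := (Matrix.isUnit_iff_isUnit_det N).1 hNu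
  set P : Fin m → ℂ := (fun j => ∫ t in (0 : ℝ)..(2 * Real.pi / ω),
        Complex.exp (-Complex.I * k * ω * t) * (((x_bls t + x_q t + w t) j : ℝ) : ℂ)) with hP
  have hPsol : P = N⁻¹.mulVec (N.mulVec P) := by
    rw [Matrix.mulVec_mulVec, Matrix.nonsing_inv_mul N hNdet, Matrix.one_mulVec]
  rw [hmain, Matrix.mulVec_add, Matrix.mulVec_smul, Matrix.mulVec_smul] at hPsol
  set S : ℂ := if k = 1 then ((2 * Real.pi / ω : ℝ) : ℂ) / (2 * Complex.I) else 0 with hS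
  have hyi : ∀ (i : Fin 1) (t : ℝ),
      (Complex.exp (-Complex.I * k * ω * t) • (fun i => ((y t i : ℝ) : ℂ))) i =
      ∑ l, (C i l : ℂ) * (Complex.exp (-Complex.I * k * ω * t) *
        (((x_bls t + x_q t + w t) l : ℝ) : ℂ)) +
      (D * a : ℂ) * (Complex.exp (-Complex.I * k * ω * t) * ((Real.sin (ω * t) : ℝ) : ℂ)) := by
    intro i t
    have : ((y t i : ℝ) : ℂ) = ∑ l, (C i l : ℂ) * (((x_bls t + x_q t + w t) l : ℝ) : ℂ) +
        D * a * ((Real.sin (ω * t) : ℝ) : ℂ) := by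
      rw [hy, hq, ← add_assoc]
      simp only [Matrix.mulVec, dotProduct, Pi.add_apply]
      push_cast
      rfl
    rw [Pi.smul_apply, this, smul_eq_mul, mul_add, Finset.mul_sum]
    congr 1
    · exact Finset.sum_congr rfl fun l _ => by ring
    · ring
  have hI1 : ∀ i : Fin 1, IntervalIntegrable (fun t : ℝ => ∑ l, (C i l : ℂ) *
      (Complex.exp (-Complex.I * k * ω * t) * (((x_bls t + x_q t + w t) l : ℝ) : ℂ)))
      MeasureTheory.volume 0 (2 * Real.pi / ω) := by
    intro i
    have := IntervalIntegrable.sum (Finset.univ) (μ := MeasureTheory.volume)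
      (f := fun l => fun t : ℝ => (C i l : ℂ) *
      (Complex.exp (-Complex.I * k * ω * t) * (((x_bls t + x_q t + w t) l : ℝ) : ℂ)))
      (fun l _ => (hint l).const_mul (C i l : ℂ))
    refine this.congr (fun t _ => ?_)
    simp
  have hI2 : IntervalIntegrable (fun t : ℝ => (D * a : ℂ) *
      (Complex.exp (-Complex.I * k * ω * t) * ((Real.sin (ω * t) : ℝ) : ℂ)))
      MeasureTheory.volume 0 (2 * Real.pi / ω) :=
    Continuous.intervalIntegrable (by fun_prop) _ _
  have hT : (0 : ℝ) ≤ 2 * Real.pi / ω := by positivity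
  have hck : c k = ((ω / (2 * Real.pi) : ℝ) : ℂ) •
      ((C.map Complex.ofReal).mulVec P + fun _ => D * a * S) := by
    rw [hc]
    congr 1
    funext i
    rw [intervalIntegral.integral_of_le hT, MeasureTheory.eval_integral,
      ← intervalIntegral.integral_of_le hT]
    · simp only [hyi]
      rw [intervalIntegral.integral_add (hI1 i) hI2, intervalIntegral.integral_const_mul, hsin,
        intervalIntegral.integral_finsetSum (fun l _ => (hint l).const_mul (C i l : ℂ))]
      simp only [intervalIntegral.integral_const_mul]
      rfl
    · intro i
      have := ((hI1 i).add hI2).1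
      refine MeasureTheory.Integrable.congr this (Filter.Eventually.of_forall fun t => ?_)
      exact (hyi i t).symm
  rw [hPsol, Matrix.mulVec_add, Matrix.mulVec_smul, Matrix.mulVec_smul] at hck
  refine ⟨?_, ?_, ?_⟩
  · intro h1
    subst h1
    have hN1 : N = (Complex.I * ω) • (1 : Matrix (Fin m) (Fin m) ℂ) - A.map Complex.ofReal := by
      rw [hN]; simp
    rw [← hN1, hck]
    have hS1 : S = ((2 * Real.pi / ω : ℝ) : ℂ) / (2 * Complex.I) := by rw [hS, if_pos rfl]
    rw [hS1]
    funext i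
    have hI := Complex.I_ne_zero
    simp only [Pi.add_apply, Pi.smul_apply, smul_eq_mul]
    push_cast
    field_simp
    norm_num
    ring
  · intro he
    have h1 : k ≠ 1 := by rintro rfl; exact absurd he (by decide)
    rw [hck, hS, if_neg h1, he.neg_one_zpow]
    funext i
    simp
  · intro h3 ho
    have h1 : k ≠ 1 := by omega
    rw [hck, hS, if_neg h1, ho.neg_one_zpow]
    funext i
    simp only [Pi.add_apply, Pi.smul_apply, smul_eq_mul]
    push_cast
    field_simp
    norm_num
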